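/- arXiv:2005.13223 — 3 statements merged into one kernel-verified Lean document; each statement's English description precedes it below -/
import Mathlib

section
/- Let q be a real number with 0 < q and q ≠ 1, let h₁, h₂, l₁, l₂, α₁, α₂ be real numbers, t₁, t₂ nonzero reals, and set λ = (h₁+h₂-l₁-l₂-α₁-α₂+1)/2. Let (i,i') = (1,2) or (i,i') = (2,1). Assume λ + α₁ = -N for some positive integer N (so (q^{λ+α₁};q)_n = 0 for all n > N and the series below is a finite sum), and assume q^{h_i-l_i+n} ≠ 1 and q^{h_i-l_{i'}+n}·t_i/t_{i'} ≠ 1 for all integers 1 ≤ n ≤ N. Then the function g(x) = x^λ · Σ_{n=0}^{N} [(q^{λ+α₁};q)_n (q^{λ+α₂};q)_n / ((q^{h_i-l_i+1};q)_n (q^{h_i-l_{i'}+1}·t_i/t_{i'};q)_n (q;q)_n)] · (q^{h_i+1/2}t_i/x ; q)_n · (x/(q^{h_{i'}-1/2}t_{i'}))^n satisfies the variant of the q-hypergeometric equation of degree two for all x > 0. -/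
/-- The finite q-shifted factorial `(a;q)_n = ∏_{i=0}^{n-1} (1 - a q^i)`. -/
noncomputable def qPoch (q a : ℝ) (n : ℕ) : ℝ :=
  ∏ i ∈ Finset.range n, (1 - a * q ^ i)

/-- The variant of the q-hypergeometric equation of degree two (for `x > 0`). -/
def qHyperVar2 (q h₁ h₂ l₁ l₂ α₁ α₂ t₁ t₂ : ℝ) (g : ℝ → ℝ) : Prop :=
  ∀ x : ℝ, 0 < x →
    (x - q ^ (h₁ + 1/2) * t₁) * (x - q ^ (h₂ + 1/2) * t₂) * g (x / q)
    + q ^ (α₁ + α₂) * (x - q ^ (l₁ - 1/2) * t₁) * (x - q ^ (l₂ - 1/2) * t₂) * g (q * x)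
    - ((q ^ α₁ + q ^ α₂) * x ^ 2
        + (-(q ^ ((h₁ + h₂ + l₁ + l₂ + α₁ + α₂) / 2))
            * ((q ^ (-h₂) + q ^ (-l₂)) * t₁ + (q ^ (-h₁) + q ^ (-l₁)) * t₂)) * x
        + q ^ ((h₁ + h₂ + l₁ + l₂ + α₁ + α₂) / 2) * (q ^ (1/2 : ℝ) + q ^ (-1/2 : ℝ)) * t₁ * t₂)
      * g x = 0

theorem qPoch_succ' (q a : ℝ) (n : ℕ) : qPoch q a (n+1) = qPoch q a n * (1 - a * q ^ n) := by
  simp [qPoch, Finset.prod_range_succ]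

theorem qPoch_zero' (q a : ℝ) : qPoch q a 0 = 1 := by
  simp [qPoch]

theorem qPoch_shift (q a : ℝ) (n : ℕ) :
    (1 - a) * qPoch q (a * q) n = qPoch q a n * (1 - a * q ^ n) := by
  rw [← qPoch_succ']
  simp only [qPoch, Finset.prod_range_succ']
  rw [mul_comm]
  simp only [pow_zero, mul_one]
  congr 1
  apply Finset.prod_congr rfl
  intro i _
  ring

theorem qPoch_head (q a : ℝ) (n : ℕ) :
    qPoch q a (n+1) = (1 - a) * qPoch q (a * q) n := by
  rw [qPoch_shift, qPoch_succ']

theorem qPoch_ne (q a : ℝ) (n : ℕ) (h : ∀ i < n, a * q ^ i ≠ 1) : qPoch q a n ≠ 0 := by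
  unfold qPoch
  rw [Finset.prod_ne_zero_iff]
  intro i hi
  rw [Finset.mem_range] at hi
  exact sub_ne_zero.mpr (h i hi).symm

noncomputable def cc (q a b u v : ℝ) (n : ℕ) : ℝ :=
  qPoch q a n * qPoch q b n / (qPoch q u n * qPoch q v n * qPoch q q n)

theorem core_sum (q a b u v A B C D x : ℝ) (N : ℕ) (hq : 0 < q) (hq1 : q ≠ 1) (hx : x ≠ 0)
    (hA : A ≠ 0) (ha : a ≠ 0) (hb : b ≠ 0) (hu : u ≠ 0) (hv : v ≠ 0)
    (hC : C = A / u) (hD : D = A / v) (hB : B = a * b * q * A / (u * v))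
    (hun : ∀ i < N, u * q ^ i ≠ 1) (hvn : ∀ i < N, v * q ^ i ≠ 1) :
    ∀ M ≤ N, ∑ n ∈ Finset.range (M + 1), cc q a b u v n *
      ((x - A) * (x - B) * (qPoch q (A / (x / q)) n * ((x / q) / (B / q)) ^ n)
       + a * b * (x - C) * (x - D) * (qPoch q (A / (q * x)) n * ((q * x) / (B / q)) ^ n)
       - ((a + b) * x ^ 2 - (A + B + A * B / (D * q) + A * B / (C * q)) * x + A * B * (1 + 1 / q))
        * (qPoch q (A / x) n * (x / (B / q)) ^ n))
      = x ^ 2 / q ^ M * cc q a b u v M * (1 - a * q ^ M) * (1 - b * q ^ M) *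
         (qPoch q (A / x) M * (x / (B / q)) ^ M) := by
  have hq0 : q ≠ 0 := hq.ne'
  intro M
  induction M with
  | zero =>
    intro _
    simp only [zero_add, Finset.sum_range_one, qPoch_zero', pow_zero, cc]
    subst hB hC hD
    field_simp
    ring
  | succ M ih =>
    intro hM
    rw [Finset.sum_range_succ, ih (by omega)]
    have hcc : cc q a b u v M * ((1 - a * q ^ M) * (1 - b * q ^ M)) =
        cc q a b u v (M+1) * ((1 - u * q ^ M) * (1 - v * q ^ M) * (1 - q * q ^ M)) := by
      have h1 : 1 - u * q ^ M ≠ 0 := sub_ne_zero.mpr (hun M (by omega)).symm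
      have h2 : 1 - v * q ^ M ≠ 0 := sub_ne_zero.mpr (hvn M (by omega)).symm
      have hqi : ∀ i : ℕ, q * q ^ i ≠ 1 := by
        intro i h
        rw [← pow_succ'] at h
        exact hq1 ((pow_eq_one_iff_of_nonneg hq.le (by omega)).mp h)
      have h3 : 1 - q * q ^ M ≠ 0 := sub_ne_zero.mpr (hqi M).symm
      have h4 := qPoch_ne q u M (fun i hi => hun i (by omega))
      have h5 := qPoch_ne q v M (fun i hi => hvn i (by omega))
      have h6 := qPoch_ne q q M (fun i _ => hqi i)
      simp only [cc, qPoch_succ']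
      generalize qPoch q u M = U at *
      generalize qPoch q v M = V at *
      generalize qPoch q q M = W at *
      generalize 1 - u * q ^ M = U1 at *
      generalize 1 - v * q ^ M = V1 at *
      generalize 1 - q * q ^ M = W1 at *
      field_simp
    have e1 : (x - A) * qPoch q (A / (x / q)) (M+1) =
        qPoch q (A / x) M * (1 - A / x * q ^ M) * (x - A * (q * q ^ M)) := by
      have := qPoch_shift q (A / x) (M+1)
      have h7 : A / (x / q) = A / x * q := by field_simp
      rw [h7]
      have h8 : x - A = x * (1 - A / x) := by field_simp
      rw [h8, mul_assoc, this, qPoch_succ', pow_succ]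
      field_simp
    have e2 : qPoch q (A / (q * x)) (M+1) = (1 - A / (q * x)) * qPoch q (A / x) M := by
      rw [qPoch_head]
      congr 2
      field_simp
    have hB0 : B ≠ 0 := by rw [hB]; positivity
    have p1 : ((x / q) / (B / q)) ^ (M+1) = (x / (B / q)) ^ M / q ^ M * (x / B) := by
      rw [← div_pow, pow_succ]
      have w1 : (x / q) / (B / q) = x / B := by field_simp
      have w2 : x / (B / q) / q = x / B := by field_simp
      rw [w1, w2]
    have p2 : ((q * x) / (B / q)) ^ (M+1) = (x / (B / q)) ^ M * q ^ M * (q ^ 2 * x / B) := by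
      rw [← mul_pow, pow_succ]
      have w1 : (q * x) / (B / q) = q ^ 2 * x / B := by field_simp
      have w2 : x / (B / q) * q = q ^ 2 * x / B := by field_simp
      rw [w1, w2]
    have p3 : (x / (B / q)) ^ (M+1) = (x / (B / q)) ^ M * (q * x / B) := by
      rw [pow_succ]
      congr 1
      field_simp
    have hQ : q ^ M ≠ 0 := pow_ne_zero _ hq0
    rw [p1, p2, p3, e2, qPoch_succ' q (A/x) M]
    generalize hZ : (x / (B / q)) ^ M = Z
    generalize hF : qPoch q (A / x) M = F at *
    generalize hP : qPoch q (A / (x / q)) (M+1) = P at *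
    generalize cc q a b u v (M+1) = c1 at *
    generalize cc q a b u v M = c0 at *
    have hs : q ^ (M+1) = q * q ^ M := pow_succ' _ _
    rw [hs]
    generalize q ^ M = Q at *
    have g1 : x ^ 2 / Q * c0 * (1 - a * Q) * (1 - b * Q) * (F * Z) =
       x ^ 2 / Q * (c1 * ((1 - u * Q) * (1 - v * Q) * (1 - q * Q))) * (F * Z) := by
      rw [← hcc]; ring
    have g2 : (x - A) * (x - B) * (P * (Z / Q * (x / B))) =
       (F * (1 - A / x * Q) * (x - A * (q * Q))) * ((x - B) * (Z / Q * (x / B))) := by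
      rw [← e1]; ring
    rw [g1, g2]
    clear g1 g2 hcc e1 e2 p1 p2 p3 hZ hF hP ih hun hvn
    subst hB hC hD
    field_simp
    ring

theorem core_eq (q a b u v A B C D x : ℝ) (N : ℕ) (hq : 0 < q) (hq1 : q ≠ 1) (hx : x ≠ 0)
    (hA : A ≠ 0) (ha : a ≠ 0) (hb : b ≠ 0) (hu : u ≠ 0) (hv : v ≠ 0)
    (hC : C = A / u) (hD : D = A / v) (hB : B = a * b * q * A / (u * v))
    (hun : ∀ i < N, u * q ^ i ≠ 1) (hvn : ∀ i < N, v * q ^ i ≠ 1) (haN : a * q ^ N = 1)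
    (S : ℝ → ℝ) (hS : ∀ y, S y = ∑ n ∈ Finset.range (N + 1), qPoch q a n * qPoch q b n /
       (qPoch q u n * qPoch q v n * qPoch q q n) * qPoch q (A / y) n * (y / (B / q)) ^ n) :
      (x - A) * (x - B) * S (x / q) + a * b * (x - C) * (x - D) * S (q * x)
       - ((a + b) * x ^ 2 - (A + B + A * B / (D * q) + A * B / (C * q)) * x + A * B * (1 + 1 / q))
        * S x = 0 := by
  have h := core_sum q a b u v A B C D x N hq hq1 hx hA ha hb hu hv hC hD hB hun hvn N le_rfl
  rw [haN] at h
  simp only [sub_self, mul_zero, zero_mul] at h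
  rw [← h, hS, hS, hS, Finset.mul_sum, Finset.mul_sum, Finset.mul_sum, ← Finset.sum_add_distrib,
    ← Finset.sum_sub_distrib]
  apply Finset.sum_congr rfl
  intro n _
  simp only [cc]
  ring

theorem main12
    (q h₁ h₂ l₁ l₂ α₁ α₂ t₁ t₂ lam : ℝ) (N : ℕ)
    (hq : 0 < q) (hq1 : q ≠ 1) (ht₁ : t₁ ≠ 0) (ht₂ : t₂ ≠ 0)
    (hlam : lam = (h₁ + h₂ - l₁ - l₂ - α₁ - α₂ + 1) / 2)
    (hNlam : lam + α₁ = -(N : ℝ))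
    (hden : ∀ n : ℕ, 1 ≤ n → n ≤ N →
      q ^ (h₁ - l₁ + (n : ℝ)) ≠ 1 ∧ q ^ (h₁ - l₂ + (n : ℝ)) * t₁ / t₂ ≠ 1) :
    qHyperVar2 q h₁ h₂ l₁ l₂ α₁ α₂ t₁ t₂ (fun x =>
      x ^ lam * ∑ n ∈ Finset.range (N + 1),
        qPoch q (q ^ (lam + α₁)) n * qPoch q (q ^ (lam + α₂)) n /
            (qPoch q (q ^ (h₁ - l₁ + 1)) n * qPoch q (q ^ (h₁ - l₂ + 1) * t₁ / t₂) n *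
              qPoch q q n) *
          qPoch q (q ^ (h₁ + 1/2) * t₁ / x) n * (x / (q ^ (h₂ - 1/2) * t₂)) ^ n) := by
  intro x hx
  have hp : ∀ s : ℝ, q ^ s ≠ 0 := fun s => (Real.rpow_pos_of_pos hq s).ne'
  have hBq : q ^ (h₂ - 1/2) * t₂ = q ^ (h₂ + 1/2) * t₂ / q := by
    rw [show h₂ - 1/2 = h₂ + 1/2 - 1 by ring, Real.rpow_sub hq (h₂ + 1/2), Real.rpow_one]
    ring
  rw [hBq]
  have key := core_eq q (q ^ (lam + α₁)) (q ^ (lam + α₂)) (q ^ (h₁ - l₁ + 1))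
    (q ^ (h₁ - l₂ + 1) * t₁ / t₂) (q ^ (h₁ + 1/2) * t₁) (q ^ (h₂ + 1/2) * t₂)
    (q ^ (l₁ - 1/2) * t₁) (q ^ (l₂ - 1/2) * t₂) x N hq hq1 hx.ne'
    (mul_ne_zero (hp _) ht₁) (hp _) (hp _) (hp _) (div_ne_zero (mul_ne_zero (hp _) ht₁) ht₂)
    (by
      rw [eq_div_iff (hp _), mul_right_comm, ← Real.rpow_add hq]
      congr 2; ring)
    (by
      rw [eq_div_iff (div_ne_zero (mul_ne_zero (hp _) ht₁) ht₂)]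
      have : q ^ (h₁ + 1/2) = q ^ (l₂ - 1/2) * q ^ (h₁ - l₂ + 1) := by
        rw [← Real.rpow_add hq]; congr 1; ring
      rw [this]; field_simp)
    (by
      rw [eq_div_iff (mul_ne_zero (hp _) (div_ne_zero (mul_ne_zero (hp _) ht₁) ht₂))]
      have : q ^ (h₂ + 1/2) * q ^ (h₁ - l₁ + 1) * q ^ (h₁ - l₂ + 1)
          = q ^ (lam + α₁) * q ^ (lam + α₂) * q ^ (1:ℝ) * q ^ (h₁ + 1/2) := by
        simp only [← Real.rpow_add hq]; congr 1; rw [hlam]; ring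
      rw [Real.rpow_one] at this
      generalize q ^ (h₂ + 1/2) = Y1 at *
      generalize q ^ (h₁ + 1/2) = Y2 at *
      field_simp
      linear_combination this)
    (by
      intro i hi
      have := (hden (i+1) (by omega) (by omega)).1
      rw [← Real.rpow_natCast, ← Real.rpow_add hq]
      convert this using 2
      push_cast; ring)
    (by
      intro i hi
      have := (hden (i+1) (by omega) (by omega)).2
      have e : q ^ (h₁ - l₂ + ((i + 1 : ℕ) : ℝ)) = q ^ (h₁ - l₂ + 1) * q ^ i := by
        rw [← Real.rpow_natCast, ← Real.rpow_add hq]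
        congr 1
        push_cast; ring
      rw [e] at this
      convert this using 1
      ring)
    (by
      rw [hNlam, ← Real.rpow_natCast, ← Real.rpow_add hq]
      simp)
    _ (fun y => rfl)
  simp only at key ⊢
  generalize hS1 : (∑ n ∈ Finset.range (N + 1), _ * (x / q / _) ^ n) = S1 at key ⊢
  generalize hS2 : (∑ n ∈ Finset.range (N + 1), _ * (q * x / _) ^ n) = S2 at key ⊢
  generalize hS3 : (∑ n ∈ Finset.range (N + 1), _ * (x / _) ^ n) = S3 at key ⊢
  clear hS1 hS2 hS3
  rw [Real.div_rpow hx.le hq.le, Real.mul_rpow hq.le hx.le]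
  have r0 : q ^ (lam + α₁) * q ^ (lam + α₂) = q ^ lam * q ^ lam * q ^ (α₁ + α₂) := by
    simp only [← Real.rpow_add hq]; congr 1; ring
  have r1 : q ^ (lam + α₁) + q ^ (lam + α₂) = q ^ lam * (q ^ α₁ + q ^ α₂) := by
    simp only [Real.rpow_add hq]; ring
  have r2 : q ^ (h₁ + 1/2) * t₁ * (q ^ (h₂ + 1/2) * t₂) * (1 + 1 / q) =
      q ^ lam * (q ^ ((h₁ + h₂ + l₁ + l₂ + α₁ + α₂) / 2) *
        (q ^ (1/2 : ℝ) + q ^ (-1/2 : ℝ)) * t₁ * t₂) := by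
    have s1 : q ^ (h₁ + 1/2) * q ^ (h₂ + 1/2) =
        q ^ lam * q ^ ((h₁ + h₂ + l₁ + l₂ + α₁ + α₂) / 2) * q ^ (1/2 : ℝ) := by
      simp only [← Real.rpow_add hq]; congr 1; rw [hlam]; ring
    have s2 : q ^ (-1/2 : ℝ) = q ^ (1/2 : ℝ) * (1 / q) := by
      rw [show (-1/2 : ℝ) = 1/2 - 1 by norm_num, Real.rpow_sub hq, Real.rpow_one]; ring
    rw [s2]
    linear_combination (t₁ * t₂ * (1 + 1/q)) * s1
  have r3 : q ^ (h₁ + 1/2) * t₁ + q ^ (h₂ + 1/2) * t₂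
      + q ^ (h₁ + 1/2) * t₁ * (q ^ (h₂ + 1/2) * t₂) / (q ^ (l₂ - 1/2) * t₂ * q)
      + q ^ (h₁ + 1/2) * t₁ * (q ^ (h₂ + 1/2) * t₂) / (q ^ (l₁ - 1/2) * t₁ * q) =
      q ^ lam * (q ^ ((h₁ + h₂ + l₁ + l₂ + α₁ + α₂) / 2)
            * ((q ^ (-h₂) + q ^ (-l₂)) * t₁ + (q ^ (-h₁) + q ^ (-l₁)) * t₂)) := by
    have s0 : ∀ s : ℝ, q ^ lam * q ^ ((h₁ + h₂ + l₁ + l₂ + α₁ + α₂) / 2) * q ^ s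
        = q ^ (h₁ + h₂ + 1/2 + s) := by
      intro s
      simp only [← Real.rpow_add hq]; congr 1; rw [hlam]; ring
    have a1 := s0 (-h₂)
    have a2 := s0 (-l₂)
    have a3 := s0 (-h₁)
    have a4 := s0 (-l₁)
    have b1 : h₁ + h₂ + 1/2 + -h₂ = h₁ + 1/2 := by ring
    have b3 : h₁ + h₂ + 1/2 + -h₁ = h₂ + 1/2 := by ring
    rw [b1] at a1
    rw [b3] at a3
    have d : ∀ l : ℝ, q ^ (h₁ + 1/2) * q ^ (h₂ + 1/2) = q ^ (h₁ + h₂ + 1/2 + -l) *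
        (q ^ (l - 1/2) * q) := by
      intro l
      nth_rewrite 5 [← Real.rpow_one q]
      simp only [← Real.rpow_add hq]; congr 1; ring
    have c2 : q ^ (h₁ + 1/2) * t₁ * (q ^ (h₂ + 1/2) * t₂) / (q ^ (l₂ - 1/2) * t₂ * q)
        = q ^ (h₁ + h₂ + 1/2 + -l₂) * t₁ := by
      rw [div_eq_iff (mul_ne_zero (mul_ne_zero (hp _) ht₂) hq.ne')]
      linear_combination (t₁ * t₂) * d l₂
    have c4 : q ^ (h₁ + 1/2) * t₁ * (q ^ (h₂ + 1/2) * t₂) / (q ^ (l₁ - 1/2) * t₁ * q)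
        = q ^ (h₁ + h₂ + 1/2 + -l₁) * t₂ := by
      rw [div_eq_iff (mul_ne_zero (mul_ne_zero (hp _) ht₁) hq.ne')]
      linear_combination (t₁ * t₂) * d l₁
    rw [c2, c4]
    linear_combination -t₁ * a1 - t₁ * a2 - t₂ * a3 - t₂ * a4
  rw [r0, r1, r2, r3] at key
  have hl := hp lam
  clear r0 r1 r2 r3 hBq
  generalize q ^ lam = L at *
  generalize q ^ (h₁ + 1/2) = Y1 at *
  generalize q ^ (h₂ + 1/2) = Y2 at *
  generalize q ^ (l₁ - 1/2) = Y3 at *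
  generalize q ^ (l₂ - 1/2) = Y4 at *
  generalize q ^ (-1/2 : ℝ) = Y5 at *
  field_simp
  linear_combination (x ^ lam) * key

theorem stmt0
    (q h₁ h₂ l₁ l₂ α₁ α₂ t₁ t₂ hᵢ hᵢ' lᵢ lᵢ' tᵢ tᵢ' lam : ℝ) (N : ℕ)
    (hq : 0 < q) (hq1 : q ≠ 1) (ht₁ : t₁ ≠ 0) (ht₂ : t₂ ≠ 0)
    (hidx : (hᵢ, hᵢ', lᵢ, lᵢ', tᵢ, tᵢ') = (h₁, h₂, l₁, l₂, t₁, t₂) ∨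
            (hᵢ, hᵢ', lᵢ, lᵢ', tᵢ, tᵢ') = (h₂, h₁, l₂, l₁, t₂, t₁))
    (hlam : lam = (h₁ + h₂ - l₁ - l₂ - α₁ - α₂ + 1) / 2)
    (hN : 0 < N) (hNlam : lam + α₁ = -(N : ℝ))
    (hden : ∀ n : ℕ, 1 ≤ n → n ≤ N →
      q ^ (hᵢ - lᵢ + (n : ℝ)) ≠ 1 ∧ q ^ (hᵢ - lᵢ' + (n : ℝ)) * tᵢ / tᵢ' ≠ 1) :
    qHyperVar2 q h₁ h₂ l₁ l₂ α₁ α₂ t₁ t₂ (fun x =>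
      x ^ lam * ∑ n ∈ Finset.range (N + 1),
        qPoch q (q ^ (lam + α₁)) n * qPoch q (q ^ (lam + α₂)) n /
            (qPoch q (q ^ (hᵢ - lᵢ + 1)) n * qPoch q (q ^ (hᵢ - lᵢ' + 1) * tᵢ / tᵢ') n *
              qPoch q q n) *
          qPoch q (q ^ (hᵢ + 1/2) * tᵢ / x) n * (x / (q ^ (hᵢ' - 1/2) * tᵢ')) ^ n) := by
  simp only [Prod.mk.injEq] at hidx
  rcases hidx with ⟨rfl, rfl, rfl, rfl, rfl, rfl⟩ | ⟨rfl, rfl, rfl, rfl, rfl, rfl⟩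
  · exact main12 q hᵢ hᵢ' lᵢ lᵢ' α₁ α₂ tᵢ tᵢ' lam N hq hq1 ht₁ ht₂ hlam hNlam hden
  · have h := main12 q hᵢ hᵢ' lᵢ lᵢ' α₁ α₂ tᵢ tᵢ' lam N hq hq1 ht₂ ht₁
      (by rw [hlam]; ring) hNlam hden
    intro x hx
    have h2 := h x hx
    rw [show (hᵢ' + hᵢ + lᵢ' + lᵢ + α₁ + α₂) / 2 = (hᵢ + hᵢ' + lᵢ + lᵢ' + α₁ + α₂) / 2 by ring]
    linear_combination h2
end

section
/- Let q be a real number with 0 < q and q ≠ 1, let h₁, h₂, l₁, l₂, α₁, α₂ be real numbers, t₁, t₂ nonzero reals, and set λ = (h₁+h₂-l₁-l₂-α₁-α₂+1)/2. Let (i,i') = (1,2) or (i,i') = (2,1). Assume λ + α₁ = -N for some positive integer N (so (q^{λ+α₁};q)_n = 0 for all n > N and the series below is a finite sum), and assume q^{h_{i'}-l_i+n}·t_{i'}/t_i ≠ 1 for all integers 1 ≤ n ≤ N and q^{h_i-l_i+k} ≠ 1 for all integers 1 ≤ k ≤ N. Define c_n = Σ_{k=0}^{n} q^{-nk+k²/2}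 · (q^{λ+α₁-h_{i'}+l_{i'}};q)_k / ((q^{h_i-l_i+1};q)_k (q;q)_{n-k} (q;q)_k) · (-q^{-λ-α₁+h_i+1/2}·t_i/(q^{l_{i'}}·t_{i'}))^k. Then the function g(x) = x^{-α₁} · Σ_{n=0}^{N} c_n · (q^{λ+α₁};q)_n/(q^{1+h_{i'}-l_i}·t_{i'}/t_i;q)_n · (x/(q^{l_i-1/2}t_i);q)_n · (q^{-λ-α₁+h_{i'}+1/2}·t_{i'}/x)^n satisfies the variant of the q-hypergeometric equation of degree two for all x > 0. (The exponent -α₁ of the prefactor is used here, consistent with the exponents at infinity and with the paper's stated confluent limits of this solution.) -/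
namespace QHV

lemma qPoch_zero (q a : ℝ) : qPoch q a 0 = 1 := by simp [qPoch]

lemma qPoch_succ (q a : ℝ) (n : ℕ) : qPoch q a (n+1) = qPoch q a n * (1 - a * q ^ n) := by
  simp [qPoch, Finset.prod_range_succ]

lemma qPoch_shift_up (q y : ℝ) (n : ℕ) :
    (1 - y) * qPoch q (q * y) n = qPoch q y n * (1 - y * q ^ n) := by
  induction n with
  | zero => simp [qPoch_zero]
  | succ n ih =>
    rw [qPoch_succ, ← mul_assoc, ih, qPoch_succ]
    ring

lemma qPoch_shift_down (q y : ℝ) (hq : q ≠ 0) (n : ℕ) :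
    qPoch q (y / q) (n+1) = (1 - y / q) * qPoch q y n := by
  induction n with
  | zero => simp [qPoch_zero, qPoch_succ]
  | succ n ih =>
    rw [qPoch_succ, ih, qPoch_succ]
    field_simp
    ring

lemma one_sub_pow_ne (q : ℝ) (hq : 0 < q) (hq1 : q ≠ 1) (m : ℕ) : 1 - q * q ^ m ≠ 0 := by
  intro h
  have h2 : q ^ (m+1) = 1 := by rw [pow_succ]; linarith
  rw [pow_eq_one_iff_of_nonneg hq.le (by omega)] at h2
  exact hq1 h2

lemma qPoch_ne (q a : ℝ) (n : ℕ) (h : ∀ k, k < n → 1 - a * q ^ k ≠ 0) : qPoch q a n ≠ 0 := by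
  rw [qPoch, Finset.prod_ne_zero_iff]
  intro i hi
  exact h i (Finset.mem_range.1 hi)

noncomputable def F (q A D w : ℝ) (n k : ℕ) : ℝ :=
  (∏ i ∈ Finset.range k, q ^ (i+1)) * (-w) ^ k / (q ^ n) ^ k * qPoch q D k /
    (qPoch q (q * A) k * qPoch q q (n - k) * qPoch q q k)

noncomputable def cc (q A D w : ℝ) (n : ℕ) : ℝ := ∑ k ∈ Finset.range (n+1), F q A D w n k

lemma F_down (q A D w : ℝ) (hq : 0 < q) (hq1 : q ≠ 1) (n k : ℕ) (hk : k ≤ n) :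
    F q A D w n k = (q ^ k - q ^ (n+1)) * F q A D w (n+1) k := by
  obtain ⟨m, rfl⟩ := Nat.exists_eq_add_of_le hk
  have e1 : k + m - k = m := by omega
  have e2 : k + m + 1 - k = m + 1 := by omega
  have h1 := one_sub_pow_ne q hq hq1 m
  have hq0 := hq.ne'
  have e3 : (q ^ k - q ^ (k+m+1)) = q ^ k * (1 - q * q ^ m) := by ring
  have e4 : (q ^ (k+m+1)) ^ k = (q ^ (k + m)) ^ k * q ^ k := by rw [← mul_pow]; ring
  unfold F
  rw [e1, e2, qPoch_succ, e3, e4]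
  have h2 : q ^ k ≠ 0 := pow_ne_zero _ hq0
  generalize 1 - q * q ^ m = v at *
  rw [show qPoch q (q*A) k * (qPoch q q m * v) * qPoch q q k
    = v * (qPoch q (q*A) k * qPoch q q m * qPoch q q k) by ring]
  generalize qPoch q (q*A) k * qPoch q q m * qPoch q q k = W
  generalize (q ^ (k+m)) ^ k = Z
  generalize q ^ k = κ at *
  rw [div_mul_eq_mul_div, div_mul_eq_mul_div, div_div, div_div, ← mul_div_assoc,
    show Z * κ * (v * W) = (κ * v) * (Z * W) by ring, mul_div_mul_left _ _ (mul_ne_zero h2 h1)]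

lemma F_up (q A D w : ℝ) (hq : 0 < q) (hq1 : q ≠ 1) (n k : ℕ) (hk : k ≤ n)
    (hA : 1 - q * A * q ^ k ≠ 0) :
    F q A D w (n+1) (k+1) * ((1 - q * A * q ^ k) * (1 - q * q ^ k)) =
      -(w / q ^ n) * (1 - D * q ^ k) * (q ^ k - q ^ (n+1)) * F q A D w (n+1) k := by
  obtain ⟨m, rfl⟩ := Nat.exists_eq_add_of_le hk
  have e1 : k + m + 1 - (k + 1) = m := by omega
  have e2 : k + m + 1 - k = m + 1 := by omega
  have h1 := one_sub_pow_ne q hq hq1 m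
  have h3 := one_sub_pow_ne q hq hq1 k
  have hq0 := hq.ne'
  have e3 : (q ^ k - q ^ (k+m+1)) = q ^ k * (1 - q * q ^ m) := by ring
  unfold F
  rw [e1, e2, qPoch_succ, qPoch_succ, qPoch_succ, qPoch_succ, e3, Finset.prod_range_succ, pow_succ (-w),
    pow_succ (q ^ (k+m+1)) k]
  have h2 : q ^ k ≠ 0 := pow_ne_zero _ hq0
  have h4 : q ^ (k+m) ≠ 0 := pow_ne_zero _ hq0
  have h5 : (q ^ (k+m+1)) ^ k ≠ 0 := pow_ne_zero _ (pow_ne_zero _ hq0)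
  have e5 : q ^ (k+m+1) = q ^ (k+m) * q := pow_succ _ _
  have e6 : q ^ (k+1) = q ^ k * q := pow_succ _ _
  generalize (q ^ (k+m+1)) ^ k = Z at *
  rw [e5, e6]
  generalize (1 - q * q ^ m) = v at *
  generalize (1 - q * q ^ k) = v' at *
  generalize (1 - q * A * q ^ k) = v'' at *
  generalize q ^ (k + m) = z at *
  generalize q ^ k = κ at *
  generalize qPoch q (q*A) k = X1
  generalize qPoch q q m = X2
  generalize qPoch q q k = X3
  generalize (∏ i ∈ Finset.range k, q ^ (i+1)) = X4
  simp only [div_eq_mul_inv, mul_inv]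
  field_simp

lemma cc_one (q A D w : ℝ) (hq : 0 < q) (hq1 : q ≠ 1) (n : ℕ) :
    cc q A D w n = ∑ k ∈ Finset.range (n+2), (q ^ k - q ^ (n+1)) * F q A D w (n+1) k := by
  rw [Finset.sum_range_succ, sub_self, zero_mul, add_zero, cc]
  refine Finset.sum_congr rfl fun k hk => F_down q A D w hq hq1 n k ?_
  have := Finset.mem_range.1 hk
  omega

lemma cc_two (q A D w : ℝ) (hq : 0 < q) (hq1 : q ≠ 1) (n : ℕ) :
    cc q A D w n = ∑ k ∈ Finset.range (n+3),
      (q ^ k - q ^ (n+1)) * (q ^ k - q ^ (n+2)) * F q A D w (n+2) k := by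
  rw [Finset.sum_range_succ, sub_self, mul_zero, zero_mul, add_zero, cc_one q A D w hq hq1]
  refine Finset.sum_congr rfl fun k hk => ?_
  have := Finset.mem_range.1 hk
  rw [F_down q A D w hq hq1 (n+1) k (by omega)]
  ring

lemma key_sum (q A D w : ℝ) (hq : 0 < q) (hq1 : q ≠ 1) (n : ℕ)
    (hA : ∀ k, k ≤ n → 1 - q * A * q ^ k ≠ 0) :
    ∑ k ∈ Finset.range (n+2),
      ((w * D / q ^ n - A) * ((q ^ k - q ^ n) * (q ^ k - q ^ (n+1)) * F q A D w (n+1) k)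
      + (w * D + 1 + A * (1 - (q+1) * q ^ n) - w / q ^ n) *
          ((q ^ k - q ^ (n+1)) * F q A D w (n+1) k)
      - (1 - A * q ^ (n+1)) * (1 - q ^ (n+1)) * F q A D w (n+1) k) = 0 := by
  have hz : q ^ n ≠ 0 := pow_ne_zero _ hq.ne'
  have key : ∀ m, m ≤ n + 1 → ∑ k ∈ Finset.range m,
      ((w * D / q ^ n - A) * ((q ^ k - q ^ n) * (q ^ k - q ^ (n+1)) * F q A D w (n+1) k)
      + (w * D + 1 + A * (1 - (q+1) * q ^ n) - w / q ^ n) *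
          ((q ^ k - q ^ (n+1)) * F q A D w (n+1) k)
      - (1 - A * q ^ (n+1)) * (1 - q ^ (n+1)) * F q A D w (n+1) k)
      = F q A D w (n+1) m * ((1 - A * q ^ m) * (1 - q ^ m)) := by
    intro m
    induction m with
    | zero => intro _; simp
    | succ m ih =>
      intro hm
      rw [Finset.sum_range_succ, ih (by omega)]
      have h := F_up q A D w hq hq1 n m (by omega) (hA m (by omega))
      rw [show (1 - A * q ^ (m+1)) * (1 - q ^ (m+1)) = ((1 - q * A * q ^ m) * (1 - q * q ^ m)) by
        ring, h]
      rw [pow_succ q n]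
      generalize q ^ n = z at *
      field_simp
      ring
  rw [Finset.sum_range_succ, key _ le_rfl]
  ring

lemma rec_succ (q A D w : ℝ) (hq : 0 < q) (hq1 : q ≠ 1) (n : ℕ)
    (hA : ∀ k, k ≤ n + 1 → 1 - q * A * q ^ k ≠ 0) :
    (w * D / q ^ (n+1) - A) * cc q A D w n
      + (w * D + 1 + A * (1 - (q+1) * q ^ (n+1)) - w / q ^ (n+1)) * cc q A D w (n+1)
      - (1 - A * q ^ (n+2)) * (1 - q ^ (n+2)) * cc q A D w (n+2) = 0 := by
  have h := key_sum q A D w hq hq1 (n+1) hA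
  rw [Finset.sum_sub_distrib, Finset.sum_add_distrib, ← Finset.mul_sum, ← Finset.mul_sum,
    ← Finset.mul_sum] at h
  rw [cc_two q A D w hq hq1 n, cc_one q A D w hq hq1 (n+1), cc]
  exact h

lemma rec_zero (q A D w : ℝ) (hq : 0 < q) (hq1 : q ≠ 1)
    (hA : 1 - q * A ≠ 0) :
    (w * D + 1 + A * (1 - (q+1)) - w) * cc q A D w 0
      - (1 - A * q) * (1 - q) * cc q A D w 1 = 0 := by
  have h := key_sum q A D w hq hq1 0 (by intro k hk; obtain rfl : k = 0 := by omega
                                         simpa using hA)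
  rw [Finset.sum_sub_distrib, Finset.sum_add_distrib, ← Finset.mul_sum, ← Finset.mul_sum,
    ← Finset.mul_sum] at h
  rw [cc_one q A D w hq hq1 0, cc]
  have h0 : ∑ k ∈ Finset.range (0+2), (q ^ k - q ^ 0) * (q ^ k - q ^ (0+1)) * F q A D w (0+1) k = 0 := by
    simp [Finset.sum_range_succ]
  rw [h0] at h
  simpa using h

/-- basis functions -/
noncomputable def phi (q y : ℝ) (n : ℕ) : ℝ := qPoch q y n / y ^ n

noncomputable def aa (q A B Q : ℝ) (n : ℕ) : ℝ :=
  A * B * q * (q ^ (n+1) - 1 / Q) * (1 - 1 / (Q * q ^ n))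
noncomputable def bb (q A B C Q : ℝ) (n : ℕ) : ℝ :=
  (1 - Q * q ^ n) * (q / Q) * (A + B + A * B * (1 - (q+1) * q ^ n) - A * B / (C * Q * q ^ n))
noncomputable def dd (q A B : ℝ) (n : ℕ) : ℝ :=
  -((1 - A * q ^ n) * (1 - B * q ^ n) * (1 - q ^ n))

noncomputable def LL (q A B C Q : ℝ) (y f1 f2 f3 : ℝ) : ℝ :=
  (y - q * A) * (y - q * B) * f1 + q * A * B / (C * Q ^ 2) * (y - 1) * (y - C) * f2
    - ((1 + q * A * B / (C * Q ^ 2)) * y ^ 2 - q / Q * (A + B + A * B + A * B / C) * y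
      + A * B * q * (1 + q) / Q) * f3

lemma L_zero (q A B C Q y : ℝ) (hC : C ≠ 0) (hQ : Q ≠ 0) (hy : y ≠ 0) :
    LL q A B C Q y (phi q (y/q) 0) (phi q (q*y) 0) (phi q y 0) =
      y * (aa q A B Q 0 * phi q y 1 + bb q A B C Q 0 * phi q y 0) := by
  simp only [LL, phi, aa, bb, qPoch_zero, qPoch_succ]
  field_simp
  ring

lemma L_succ (q A B C Q y : ℝ) (hq : q ≠ 0) (hC : C ≠ 0) (hQ : Q ≠ 0) (hy : y ≠ 0) (n : ℕ) :
    LL q A B C Q y (phi q (y/q) (n+1)) (phi q (q*y) (n+1)) (phi q y (n+1)) =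
      y * (aa q A B Q (n+1) * phi q y (n+2) + bb q A B C Q (n+1) * phi q y (n+1)
        + dd q A B (n+1) * phi q y n) := by
  have h1 := qPoch_shift_up q y (n+1)
  have h2 := qPoch_shift_down q y hq n
  have e : LL q A B C Q y (phi q (y/q) (n+1)) (phi q (q*y) (n+1)) (phi q y (n+1)) =
    (y - q * A) * (y - q * B) * (qPoch q (y/q) (n+1) / (y / q) ^ (n+1))
     - q * A * B / (C * Q ^ 2) * ((1 - y) * qPoch q (q * y) (n+1)) * (y - C) / (q * y) ^ (n+1)
    - ((1 + q * A * B / (C * Q ^ 2)) * y ^ 2 - q / Q * (A + B + A * B + A * B / C) * y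
      + A * B * q * (1 + q) / Q) * phi q y (n+1) := by
    simp only [LL, phi]; ring
  rw [e, h1, h2]
  simp only [phi, aa, bb, dd, qPoch_succ]
  rw [mul_pow, div_pow]
  simp only [pow_succ]
  have hz : q ^ n ≠ 0 := pow_ne_zero _ hq
  have hyn : y ^ n ≠ 0 := pow_ne_zero _ hy
  generalize qPoch q y n = X
  generalize q ^ n = z at *
  generalize y ^ n = yn at *
  field_simp
  ring

noncomputable def CC (q A B C Q : ℝ) (n : ℕ) : ℝ :=
  cc q A (Q * C / B) (A / (Q * C)) n * (qPoch q Q n / qPoch q (q * B) n) * (q * B / Q) ^ n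

lemma C_rec_succ (q A B C Q : ℝ) (hq : 0 < q) (hq1 : q ≠ 1) (hB : B ≠ 0) (hC : C ≠ 0)
    (hQ : Q ≠ 0) (n : ℕ)
    (hAn : ∀ k, k ≤ n + 1 → 1 - q * A * q ^ k ≠ 0)
    (hBn : ∀ k, k ≤ n + 1 → 1 - q * B * q ^ k ≠ 0) :
    aa q A B Q n * CC q A B C Q n + bb q A B C Q (n+1) * CC q A B C Q (n+1)
      + dd q A B (n+2) * CC q A B C Q (n+2) = 0 := by
  have h := rec_succ q A (Q * C / B) (A / (Q * C)) hq hq1 n hAn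
  simp only [CC, aa, bb, dd, qPoch_succ]
  have hz : q ^ n ≠ 0 := pow_ne_zero _ hq.ne'
  have hq0 := hq.ne'
  have b1 := hBn n (by omega)
  have b2 := hBn (n+1) (by omega)
  generalize cc q A (Q * C / B) (A / (Q * C)) n = c0 at *
  generalize cc q A (Q * C / B) (A / (Q * C)) (n+1) = c1 at *
  generalize cc q A (Q * C / B) (A / (Q * C)) (n+2) = c2 at *
  have hX : qPoch q (q * B) n ≠ 0 := qPoch_ne _ _ _ fun k hk => hBn k (by omega)
  generalize qPoch q (q * B) n = X at *
  generalize qPoch q Q n = X'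
  simp only [pow_succ] at *
  have hw : (q * B / Q) ^ n ≠ 0 := pow_ne_zero _ (by positivity)
  generalize (q * B / Q) ^ n = W at *
  generalize q ^ n = z at *
  have e2 : (1 - B * (z * q * q)) = 1 - q * B * (z * q) := by ring
  rw [e2]
  obtain ⟨V1, hV1⟩ : ∃ V, V = 1 - q * B * z := ⟨_, rfl⟩
  obtain ⟨V2, hV2⟩ : ∃ V, V = 1 - q * B * (z * q) := ⟨_, rfl⟩
  rw [← hV1] at b1 ⊢
  rw [← hV2] at b2 ⊢
  have key : ∀ u, u = (1 - Q * (z * q)) * B * (q / Q) * W * X' * (1 - Q * z) * (q * B / Q) / (X * V1) →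
     A * B * q * (z * q - 1 / Q) * (1 - 1 / (Q * z)) * (c0 * (X' / X) * W) +
        (1 - Q * (z * q)) * (q / Q) * (A + B + A * B * (1 - (q + 1) * (z * q)) - A * B / (C * Q * (z * q))) *
          (c1 * (X' * (1 - Q * z) / (X * V1)) * (W * (q * B / Q))) +
      -((1 - A * (z * q * q)) * V2 * (1 - z * q * q)) *
        (c2 * (X' * (1 - Q * z) * (1 - Q * (z * q)) / (X * V1 * V2)) *
          (W * (q * B / Q) * (q * B / Q))) = u * ((A / (Q * C) * (Q * C / B) / (z * q) - A) * c0 +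
        (A / (Q * C) * (Q * C / B) + 1 + A * (1 - (q + 1) * (z * q)) - A / (Q * C) / (z * q)) * c1 -
      (1 - A * (z * q * q)) * (1 - z * q * q) * c2) := by
    rintro u rfl
    field_simp
    rw [hV1]
    ring
  rw [key _ rfl, h, mul_zero]

lemma C_rec_zero (q A B C Q : ℝ) (hq : 0 < q) (hq1 : q ≠ 1) (hB : B ≠ 0) (hC : C ≠ 0)
    (hQ : Q ≠ 0) (hA : 1 - q * A ≠ 0) (hBn : 1 - q * B ≠ 0) :
    bb q A B C Q 0 * CC q A B C Q 0 + dd q A B 1 * CC q A B C Q 1 = 0 := by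
  have h := rec_zero q A (Q * C / B) (A / (Q * C)) hq hq1 hA
  simp only [CC, bb, dd, qPoch_succ, qPoch_zero]
  have hq0 := hq.ne'
  generalize cc q A (Q * C / B) (A / (Q * C)) 0 = c1 at *
  generalize cc q A (Q * C / B) (A / (Q * C)) 1 = c2 at *
  have key : ∀ u, u = (1 - Q) * B * (q / Q) → (1 - Q * q ^ 0) * (q / Q) * (A + B + A * B * (1 - (q + 1) * q ^ 0) - A * B / (C * Q * q ^ 0)) *
        (c1 * (1 / 1) * (q * B / Q) ^ 0) +
      -((1 - A * q ^ 1) * (1 - B * q ^ 1) * (1 - q ^ 1)) *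
        (c2 * (1 * (1 - Q * q ^ 0) / (1 * (1 - q * B * q ^ 0))) * (q * B / Q) ^ 1) = u * ((A / (Q * C) * (Q * C / B) + 1 + A * (1 - (q + 1)) - A / (Q * C)) * c1 - (1 - A * q) * (1 - q) * c2) := by
    rintro u rfl
    have e : 1 - B * q ^ 1 = 1 - q * B := by ring
    rw [e]
    simp only [pow_zero, mul_one, one_mul, pow_one]
    field_simp
    ring
  rw [key _ rfl, h, mul_zero]

lemma core (q A B C Q y : ℝ) (N : ℕ) (hq : 0 < q) (hq1 : q ≠ 1) (hB : B ≠ 0)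
    (hC : C ≠ 0) (hQ : Q * q ^ N = 1) (hy : y ≠ 0) (hN : 0 < N)
    (hAn : ∀ k, k < N → 1 - q * A * q ^ k ≠ 0)
    (hBn : ∀ k, k < N → 1 - q * B * q ^ k ≠ 0) :
    ∑ n ∈ Finset.range (N+1), CC q A B C Q n *
      LL q A B C Q y (phi q (y/q) n) (phi q (q*y) n) (phi q y n) = 0 := by
  have hq0 := hq.ne'
  have hQ0 : Q ≠ 0 := by rintro rfl; simp at hQ
  have part : ∀ m, m + 1 ≤ N → ∑ n ∈ Finset.range (m+1), CC q A B C Q n *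
      LL q A B C Q y (phi q (y/q) n) (phi q (q*y) n) (phi q y n) =
      y * (aa q A B Q m * CC q A B C Q m * phi q y (m+1)
        - dd q A B (m+1) * CC q A B C Q (m+1) * phi q y m) := by
    intro m
    induction m with
    | zero =>
      intro hm
      rw [Finset.sum_range_succ, Finset.sum_range_zero, L_zero q A B C Q y hC hQ0 hy]
      have h := C_rec_zero q A B C Q hq hq1 hB hC hQ0 (by simpa using hAn 0 hN)
        (by simpa using hBn 0 hN)
      linear_combination y * phi q y 0 * h
    | succ m ih =>
      intro hm
      rw [Finset.sum_range_succ, ih (by omega), L_succ q A B C Q y hq0 hC hQ0 hy m]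
      have h := C_rec_succ q A B C Q hq hq1 hB hC hQ0 m (fun k hk => hAn k (by omega))
        (fun k hk => hBn k (by omega))
      linear_combination y * phi q y (m+1) * h
  obtain ⟨m, rfl⟩ : ∃ m, N = m + 1 := ⟨N - 1, by omega⟩
  rw [Finset.sum_range_succ, part m le_rfl, L_succ q A B C Q y hq0 hC hQ0 hy m]
  have h1 : bb q A B C Q (m+1) = 0 := by simp [bb, hQ]
  have h2 : aa q A B Q (m+1) = 0 := by simp [aa, hQ]
  have h3 : aa q A B Q m = 0 := by
    have : q ^ (m+1) = 1 / Q := by field_simp; linarith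
    simp [aa, this]
  rw [h1, h2, h3]
  ring

lemma core' (q A B C Q y : ℝ) (N : ℕ) (hq : 0 < q) (hq1 : q ≠ 1) (hB : B ≠ 0)
    (hC : C ≠ 0) (hQ : Q * q ^ N = 1) (hy : y ≠ 0) (hN : 0 < N)
    (hAn : ∀ k, k < N → 1 - q * A * q ^ k ≠ 0)
    (hBn : ∀ k, k < N → 1 - q * B * q ^ k ≠ 0) :
    LL q A B C Q y (∑ n ∈ Finset.range (N+1), CC q A B C Q n * phi q (y/q) n)
      (∑ n ∈ Finset.range (N+1), CC q A B C Q n * phi q (q*y) n)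
      (∑ n ∈ Finset.range (N+1), CC q A B C Q n * phi q y n) = 0 := by
  rw [← core q A B C Q y N hq hq1 hB hC hQ hy hN hAn hBn]
  simp only [LL, Finset.mul_sum]
  rw [← Finset.sum_add_distrib, ← Finset.sum_sub_distrib]
  exact Finset.sum_congr rfl fun n _ => by ring

end QHV
namespace QHV

lemma exp_id (q : ℝ) (hq : 0 < q) (n k : ℕ) :
    q ^ (-(n : ℝ) * (k : ℝ) + (k : ℝ) ^ 2 / 2) * (q ^ (1/2 : ℝ)) ^ k =
      (∏ i ∈ Finset.range k, q ^ (i+1)) / (q ^ n) ^ k := by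
  induction k with
  | zero => simp
  | succ k ih =>
    rw [Finset.prod_range_succ, pow_succ (q ^ n), mul_div_mul_comm, ← ih, pow_succ (q ^ (1/2 : ℝ)),
      ← Real.rpow_natCast q n, ← Real.rpow_natCast q (k+1), ← Real.rpow_sub hq]
    have : q ^ (-(n : ℝ) * ((k + 1 : ℕ) : ℝ) + ((k + 1 : ℕ) : ℝ) ^ 2 / 2) * q ^ (1/2 : ℝ) =
      q ^ (-(n : ℝ) * (k : ℝ) + (k : ℝ) ^ 2 / 2) * q ^ (((k + 1 : ℕ) : ℝ) - n) := by
      rw [← Real.rpow_add hq, ← Real.rpow_add hq]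
      congr 1
      push_cast
      ring
    linear_combination (q ^ (1/2 : ℝ)) ^ k * this

lemma main (q h H l L α₁ α₂ t T lam : ℝ) (N : ℕ)
    (hq : 0 < q) (hq1 : q ≠ 1) (ht : t ≠ 0) (hT : T ≠ 0)
    (hlam : lam = (h + H - l - L - α₁ - α₂ + 1) / 2)
    (hN : 0 < N) (hNlam : lam + α₁ = -(N : ℝ))
    (hden₁ : ∀ n : ℕ, 1 ≤ n → n ≤ N → q ^ (H - l + (n : ℝ)) * T / t ≠ 1)
    (hden₂ : ∀ k : ℕ, 1 ≤ k → k ≤ N → q ^ (h - l + (k : ℝ)) ≠ 1) :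
    qHyperVar2 q h H l L α₁ α₂ t T (fun x =>
      x ^ (-α₁) * ∑ n ∈ Finset.range (N + 1),
        (∑ k ∈ Finset.range (n + 1),
            q ^ (-(n : ℝ) * (k : ℝ) + (k : ℝ) ^ 2 / 2) *
                qPoch q (q ^ (lam + α₁ - H + L)) k /
                (qPoch q (q ^ (h - l + 1)) k * qPoch q q (n - k) * qPoch q q k) *
              (-(q ^ (-lam - α₁ + h + 1/2) * t / (q ^ L * T))) ^ k) *
          (qPoch q (q ^ (lam + α₁)) n / qPoch q (q ^ (1 + H - l) * T / t) n) *
          qPoch q (x / (q ^ (l - 1/2) * t)) n *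
          (q ^ (-lam - α₁ + H + 1/2) * T / x) ^ n) := by
  have hq0 := hq.ne'
  have P : ∀ s : ℝ, q ^ s ≠ 0 := fun s => (Real.rpow_pos_of_pos hq s).ne'
  have radd : ∀ a b : ℝ, q ^ a * q ^ b = q ^ (a + b) := fun a b => (Real.rpow_add hq a b).symm
  -- parameters
  obtain ⟨A, hA⟩ : ∃ A, A = q ^ (h - l) := ⟨_, rfl⟩
  obtain ⟨B, hB⟩ : ∃ B, B = q ^ (H - l) * T / t := ⟨_, rfl⟩
  obtain ⟨C, hC⟩ : ∃ C, C = q ^ (L - l) * T / t := ⟨_, rfl⟩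
  obtain ⟨Q, hQ⟩ : ∃ Q, Q = q ^ (lam + α₁) := ⟨_, rfl⟩
  obtain ⟨τ, hτ⟩ : ∃ τ, τ = q ^ (l - 1/2) * t := ⟨_, rfl⟩
  have hA0 : A ≠ 0 := hA ▸ P _
  have hB0 : B ≠ 0 := by rw [hB]; exact div_ne_zero (mul_ne_zero (P _) hT) ht
  have hC0 : C ≠ 0 := by rw [hC]; exact div_ne_zero (mul_ne_zero (P _) hT) ht
  have hQ0 : Q ≠ 0 := hQ ▸ P _
  have hτ0 : τ ≠ 0 := by rw [hτ]; exact mul_ne_zero (P _) ht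
  have hQN : Q * q ^ N = 1 := by
    rw [hQ, hNlam, ← Real.rpow_natCast, radd]; simp
  have r1 : ∀ s : ℝ, q * q ^ s = q ^ (1 + s) := fun s => by
    rw [Real.rpow_add hq, Real.rpow_one]
  have pA : q ^ (h - l + 1) = q * A := by rw [hA, r1]; congr 1; ring
  have pB : q ^ (1 + H - l) * T / t = q * B := by
    rw [hB, show 1 + H - l = 1 + (H - l) by ring, ← r1]; ring
  have pD : q ^ (lam + α₁ - H + L) = Q * C / B := by
    rw [hQ, hC, hB]
    have : q ^ (lam + α₁) * q ^ (L - l) = q ^ (lam + α₁ - H + L) * q ^ (H - l) := by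
      rw [radd, radd]; congr 1; ring
    have := P (H - l)
    field_simp
    linarith
  have pw : q ^ (-lam - α₁ + h + 1/2) * t / (q ^ L * T) = q ^ (1/2 : ℝ) * (A / (Q * C)) := by
    rw [hA, hQ, hC]
    have : q ^ (-lam - α₁ + h + 1/2) * (q ^ (lam + α₁) * q ^ (L - l)) =
      q ^ (1/2 : ℝ) * q ^ (h - l) * q ^ L := by
      simp only [radd]; congr 1; ring
    have := P (L - l)
    have := P (lam + α₁)
    have := P L
    generalize q ^ (-lam - α₁ + h + 1/2) = z1 at *
    generalize q ^ (1/2 : ℝ) = z2 at *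
    field_simp
    linarith
  have px : q ^ (-lam - α₁ + H + 1/2) * T = q * B / Q * τ := by
    rw [hB, hQ, hτ]
    have : q ^ (-lam - α₁ + H + 1/2) * q ^ (lam + α₁) = q * q ^ (H - l) * q ^ (l - 1/2) := by
      rw [r1, radd, radd]; congr 1; ring
    have := P (lam + α₁)
    generalize q ^ (-lam - α₁ + H + 1/2) = z1 at *
    generalize q ^ (l - 1/2) = z2 at *
    field_simp
    linarith
  have hsum : ∀ x : ℝ, x ≠ 0 → ∑ n ∈ Finset.range (N + 1),
        (∑ k ∈ Finset.range (n + 1),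
            q ^ (-(n : ℝ) * (k : ℝ) + (k : ℝ) ^ 2 / 2) *
                qPoch q (q ^ (lam + α₁ - H + L)) k /
                (qPoch q (q ^ (h - l + 1)) k * qPoch q q (n - k) * qPoch q q k) *
              (-(q ^ (-lam - α₁ + h + 1/2) * t / (q ^ L * T))) ^ k) *
          (qPoch q (q ^ (lam + α₁)) n / qPoch q (q ^ (1 + H - l) * T / t) n) *
          qPoch q (x / (q ^ (l - 1/2) * t)) n *
          (q ^ (-lam - α₁ + H + 1/2) * T / x) ^ n =
      ∑ n ∈ Finset.range (N+1), CC q A B C Q n * phi q (x / τ) n := by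
    intro x hx
    refine Finset.sum_congr rfl fun n _ => ?_
    rw [pA, pB, pD, pw, px, ← hτ, ← hQ]
    have e : (∑ k ∈ Finset.range (n + 1),
            q ^ (-(n : ℝ) * (k : ℝ) + (k : ℝ) ^ 2 / 2) *
                qPoch q (Q * C / B) k /
                (qPoch q (q * A) k * qPoch q q (n - k) * qPoch q q k) *
              (-(q ^ (1/2 : ℝ) * (A / (Q * C)))) ^ k) = cc q A (Q * C / B) (A / (Q * C)) n := by
      refine Finset.sum_congr rfl fun k _ => ?_
      rw [F, mul_div_right_comm _ _ ((q ^ n) ^ k), ← exp_id q hq n k, ← mul_neg, mul_pow]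
      ring
    rw [e, CC, phi, show q * B / Q * τ / x = (q * B / Q) / (x / τ) by field_simp, div_pow]
    ring
  intro x hx
  have hx0 := hx.ne'
  have c1 : (x / q) ^ (-α₁) = x ^ (-α₁) * q ^ α₁ := by
    rw [Real.div_rpow hx.le hq.le, Real.rpow_neg hq.le, div_inv_eq_mul]
  have c2 : (q * x) ^ (-α₁) = x ^ (-α₁) * q ^ (-α₁) := by
    rw [Real.mul_rpow hq.le hx.le, mul_comm]
  have core := core' q A B C Q (x / τ) N hq hq1 hB0 hC0 hQN (div_ne_zero hx0 hτ0) hN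
    (by
      intro k hk hh
      apply hden₂ (k+1) (by omega) (by omega)
      push_cast
      rw [← add_assoc, add_right_comm, Real.rpow_add hq, pA, Real.rpow_natCast] 
      linarith)
    (by
      intro k hk hh
      apply hden₁ (k+1) (by omega) (by omega)
      push_cast
      rw [show H - l + ((k:ℝ) + 1) = (1 + H - l) + k by ring, Real.rpow_add hq, Real.rpow_natCast,
        mul_right_comm, mul_div_right_comm, pB]
      linarith)
  simp only []
  rw [hsum _ (div_ne_zero hx0 hq0), hsum _ (mul_ne_zero hq0 hx0), hsum _ hx0, c1, c2,
    show x / q / τ = x / τ / q by field_simp, show q * x / τ = q * (x / τ) by ring]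
  generalize ∑ n ∈ Finset.range (N+1), CC q A B C Q n * phi q (x / τ / q) n = f1 at *
  generalize ∑ n ∈ Finset.range (N+1), CC q A B C Q n * phi q (q * (x / τ)) n = f2 at *
  generalize ∑ n ∈ Finset.range (N+1), CC q A B C Q n * phi q (x / τ) n = f3 at *
  have s1 : q ^ (h + 1/2) * t = τ * (q * A) := by
    have : q ^ (h + 1/2) = q ^ (l - 1/2) * (q * q ^ (h - l)) := by
      rw [r1, radd]; congr 1; ring
    rw [hτ, hA, this]; ring
  have s2 : q ^ (H + 1/2) * T = τ * (q * B) := by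
    have : q ^ (H + 1/2) = q ^ (l - 1/2) * (q * q ^ (H - l)) := by
      rw [r1, radd]; congr 1; ring
    rw [hτ, hB, this]; field_simp
  have s3 : q ^ (L - 1/2) * T = τ * C := by
    have : q ^ (L - 1/2) = q ^ (l - 1/2) * (q ^ (L - l)) := by
      rw [radd]; congr 1; ring
    rw [hτ, hC, this]; field_simp
  have R1 : q ^ α₂ = q ^ α₁ * (q * A * B / (C * Q ^ 2)) := by
    have hexp : α₂ = h + H - l - L - α₁ + 1 - 2 * lam := by rw [hlam]; ring
    have : q ^ α₂ * (q ^ (L - l) * (q ^ (lam + α₁) * q ^ (lam + α₁))) =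
        q ^ α₁ * (q * q ^ (h - l) * q ^ (H - l)) := by
      rw [r1]; simp only [radd]; congr 1; rw [hexp]; ring
    rw [hA, hB, hC, hQ]
    have := P (lam + α₁)
    have := P (L - l)
    field_simp
    linarith
  have pp : (h + H + l + L + α₁ + α₂) / 2 = h + H + 1/2 - lam := by rw [hlam]; ring
  have R2 : q ^ ((h + H + l + L + α₁ + α₂) / 2) *
      ((q ^ (-H) + q ^ (-L)) * t + (q ^ (-h) + q ^ (-l)) * T) =
      q ^ α₁ * τ * (q / Q * (A + B + A * B + A * B / C)) := by
    have u1 : q ^ (h + H + 1/2 - lam) * q ^ (-H) * q ^ (lam + α₁) = q ^ α₁ * q ^ (l - 1/2) * (q * q ^ (h - l)) := by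
      rw [r1]; simp only [radd]; congr 1; ring
    have u2 : q ^ (h + H + 1/2 - lam) * q ^ (-L) * q ^ (lam + α₁) * q ^ (L - l) = q ^ α₁ * q ^ (l - 1/2) * (q * q ^ (h - l)) * q ^ (H - l) := by
      rw [r1]; simp only [radd]; congr 1; ring
    have u3 : q ^ (h + H + 1/2 - lam) * q ^ (-h) * q ^ (lam + α₁) = q ^ α₁ * q ^ (l - 1/2) * (q * q ^ (H - l)) := by
      rw [r1]; simp only [radd]; congr 1; ring
    have u4 : q ^ (h + H + 1/2 - lam) * q ^ (-l) * q ^ (lam + α₁) = q ^ α₁ * q ^ (l - 1/2) * (q * q ^ (h - l)) * q ^ (H - l) := by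
      rw [r1]; simp only [radd]; congr 1; ring
    rw [pp, hA, hB, hC, hQ, hτ]
    have := P (lam + α₁)
    have := P (L - l)
    generalize q ^ (h + H + 1/2 - lam) = p at *
    generalize q ^ (-H) = a1 at *
    generalize q ^ (-L) = a2 at *
    generalize q ^ (-h) = a3 at *
    generalize q ^ (-l) = a4 at *
    generalize q ^ (lam + α₁) = a5 at *
    generalize q ^ (L - l) = a6 at *
    generalize q ^ (H - l) = a7 at *
    generalize q ^ (h - l) = a8 at *
    generalize q ^ (l - 1/2) = a9 at *
    field_simp
    linear_combination a6 * t * u1 + t * u2 + a6 * T * u3 + a6 * T * u4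
  have R3 : q ^ ((h + H + l + L + α₁ + α₂) / 2) * (q ^ (1/2 : ℝ) + q ^ (-1/2 : ℝ)) * t * T =
      q ^ α₁ * τ ^ 2 * (A * B * q * (1 + q) / Q) := by
    have u1 : q ^ (h + H + 1/2 - lam) * q ^ (1/2 : ℝ) * q ^ (lam + α₁) = q ^ α₁ * (q ^ (l - 1/2) * q ^ (l - 1/2)) * q ^ (h - l) * q ^ (H - l) * (q * q ^ (1:ℝ)) := by
      rw [r1]; simp only [radd]; congr 1; ring
    have u2 : q ^ (h + H + 1/2 - lam) * q ^ (-1/2 : ℝ) * q ^ (lam + α₁) = q ^ α₁ * (q ^ (l - 1/2) * q ^ (l - 1/2)) * q ^ (h - l) * q ^ (H - l) * q ^ (1:ℝ) := by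
      simp only [radd]; congr 1; ring
    rw [Real.rpow_one] at u1 u2
    rw [pp, hA, hB, hQ, hτ]
    have := P (lam + α₁)
    generalize q ^ (h + H + 1/2 - lam) = p at *
    generalize q ^ (lam + α₁) = a5 at *
    generalize q ^ (H - l) = a7 at *
    generalize q ^ (h - l) = a8 at *
    generalize q ^ (l - 1/2) = a9 at *
    generalize q ^ (1/2 : ℝ) = a10 at *
    generalize q ^ (-1/2 : ℝ) = a11 at *
    field_simp
    linear_combination u1 + u2
  have R4 : q ^ (α₁ + α₂) * q ^ (-α₁) = q ^ α₂ := by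
    rw [radd]; congr 1; ring
  rw [s1, s2, s3, ← hτ, R3, neg_mul, R2]
  obtain ⟨y, hy⟩ : ∃ y, y = x / τ := ⟨_, rfl⟩
  have hxy : x = τ * y := by rw [hy]; field_simp
  rw [← hy] at core
  unfold LL at core
  generalize x ^ (-α₁) = X
  subst hxy
  rw [R1] at *
  generalize q * A * B / (C * Q ^ 2) = R at *
  generalize q / Q * (A + B + A * B + A * B / C) = e1 at *
  generalize A * B * q * (1 + q) / Q = e0 at *
  linear_combination X * q ^ α₁ * τ ^ 2 * core + X * (τ * y - τ) * (τ * y - τ * C) * f2 * R4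

lemma symm_eq (q h H l L α₁ α₂ t T : ℝ) (g : ℝ → ℝ) (hg : qHyperVar2 q h H l L α₁ α₂ t T g) :
    qHyperVar2 q H h L l α₁ α₂ T t g := by
  intro x hx
  have := hg x hx
  rw [show H + h + L + l + α₁ + α₂ = h + H + l + L + α₁ + α₂ by ring]
  linear_combination this

end QHV

theorem stmt1
    (q h₁ h₂ l₁ l₂ α₁ α₂ t₁ t₂ hᵢ hᵢ' lᵢ lᵢ' tᵢ tᵢ' lam : ℝ) (N : ℕ)
    (hq : 0 < q) (hq1 : q ≠ 1) (ht₁ : t₁ ≠ 0) (ht₂ : t₂ ≠ 0)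
    (hidx : (hᵢ, hᵢ', lᵢ, lᵢ', tᵢ, tᵢ') = (h₁, h₂, l₁, l₂, t₁, t₂) ∨
            (hᵢ, hᵢ', lᵢ, lᵢ', tᵢ, tᵢ') = (h₂, h₁, l₂, l₁, t₂, t₁))
    (hlam : lam = (h₁ + h₂ - l₁ - l₂ - α₁ - α₂ + 1) / 2)
    (hN : 0 < N) (hNlam : lam + α₁ = -(N : ℝ))
    (hden₁ : ∀ n : ℕ, 1 ≤ n → n ≤ N → q ^ (hᵢ' - lᵢ + (n : ℝ)) * tᵢ' / tᵢ ≠ 1)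
    (hden₂ : ∀ k : ℕ, 1 ≤ k → k ≤ N → q ^ (hᵢ - lᵢ + (k : ℝ)) ≠ 1) :
    qHyperVar2 q h₁ h₂ l₁ l₂ α₁ α₂ t₁ t₂ (fun x =>
      x ^ (-α₁) * ∑ n ∈ Finset.range (N + 1),
        (∑ k ∈ Finset.range (n + 1),
            q ^ (-(n : ℝ) * (k : ℝ) + (k : ℝ) ^ 2 / 2) *
                qPoch q (q ^ (lam + α₁ - hᵢ' + lᵢ')) k /
                (qPoch q (q ^ (hᵢ - lᵢ + 1)) k * qPoch q q (n - k) * qPoch q q k) *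
              (-(q ^ (-lam - α₁ + hᵢ + 1/2) * tᵢ / (q ^ lᵢ' * tᵢ'))) ^ k) *
          (qPoch q (q ^ (lam + α₁)) n / qPoch q (q ^ (1 + hᵢ' - lᵢ) * tᵢ' / tᵢ) n) *
          qPoch q (x / (q ^ (lᵢ - 1/2) * tᵢ)) n *
          (q ^ (-lam - α₁ + hᵢ' + 1/2) * tᵢ' / x) ^ n) := by
  simp only [Prod.mk.injEq] at hidx
  rcases hidx with ⟨rfl, rfl, rfl, rfl, rfl, rfl⟩ | ⟨rfl, rfl, rfl, rfl, rfl, rfl⟩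
  · exact QHV.main q _ _ _ _ α₁ α₂ _ _ lam N hq hq1 ht₁ ht₂ hlam hN hNlam hden₁ hden₂
  · exact QHV.symm_eq _ _ _ _ _ _ _ _ _ _
      (QHV.main q _ _ _ _ α₁ α₂ _ _ lam N hq hq1 ht₂ ht₁ (by rw [hlam]; ring) hN hNlam hden₁ hden₂)
end

section
/- Let q be a real number with 0 < q and q ≠ 1, let h₁, h₂, l₁, α₁, λ be real numbers and t₁, t₂ nonzero reals, and let (i,i') = (1,2) or (i,i') = (2,1). Assume λ + α₁ = -N for some positive integer N (so (q^{λ+α₁};q)_n = 0 for all n > N and the series below is a finite sum), and assume q^{h_i-l₁+n}·t_i/t₁ ≠ 1 for all integers 1 ≤ n ≤ N. Then the function g(x) = x^{λ} · Σ_{n=0}^{N} [(q^{λ+α₁};q)_n / ((q^{h_i-l₁+1}·t_i/t₁;q)_n (q;q)_n)] · (q^{h_i+1/2}t_i/x;q)_n · (x/(q^{h_{i'}-1/2}t_{i'}))^n satisfies the variant of the confluent q-hypergeometric equation of type (1,2) for all x > 0. -/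
/-- The variant of the confluent q-hypergeometric equation of type (1,2) (for `x > 0`). -/
def confEq12 (q h₁ h₂ l₁ α₁ lam t₁ t₂ : ℝ) (g : ℝ → ℝ) : Prop :=
  ∀ x : ℝ, 0 < x →
    q ^ (h₁ + h₂ - l₁ - 2 * lam + 1/2) * t₂ * (q ^ (l₁ - 1/2) * t₁ - x) * g (q * x)
    + (x - q ^ (h₁ + 1/2) * t₁) * (x - q ^ (h₂ + 1/2) * t₂) * g (x / q)
    - (q ^ α₁ * x ^ 2
        - q ^ (h₁ + h₂ - lam + 1/2) * (q ^ (-h₂) * t₁ + q ^ (-h₁) * t₂ + q ^ (-l₁) * t₂) * x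
        + q ^ (h₁ + h₂ - lam) * (q + 1) * t₁ * t₂) * g x = 0

open Finset in
theorem aux_P_div (q a x : ℝ) (hq : q ≠ 0) (n : ℕ) :
    (x - a) * (∏ i ∈ range n, (x / q - a * q ^ i)) * q ^ n = ∏ i ∈ range (n + 1), (x - a * q ^ i) := by
  induction n with
  | zero => simp
  | succ k ih =>
    rw [prod_range_succ _ (k + 1), ← ih, prod_range_succ]
    field_simp
    ring

open Finset in
theorem aux_P_mul (q a x : ℝ) (hq : q ≠ 0) (n : ℕ) :
    (∏ i ∈ range (n + 1), (q * x - a * q ^ i))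
      = q ^ (n + 1) * (x - a / q) * ∏ i ∈ range n, (x - a * q ^ i) := by
  induction n with
  | zero => simp; field_simp
  | succ k ih =>
    rw [prod_range_succ _ (k + 1), ih, prod_range_succ _ k]
    field_simp
    ring

open Finset in
theorem aux_u (q a x d : ℝ) (hx : x ≠ 0) (n : ℕ) :
    qPoch q (a / x) n * (x / d) ^ n = (1 / d) ^ n * ∏ i ∈ range n, (x - a * q ^ i) := by
  unfold qPoch
  induction n with
  | zero => simp
  | succ k ih =>
    rw [prod_range_succ, prod_range_succ, pow_succ, pow_succ]
    calc _ = ((∏ i ∈ range k, (1 - a / x * q ^ i)) * (x / d) ^ k) * ((1 - a / x * q ^ k) * (x / d)) := by ring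
      _ = _ := by rw [ih]; field_simp

/-- action of the operator on the basis polynomials -/
theorem aux_T (q a b c D x : ℝ) (hq : q ≠ 0) (hc : c ≠ 0) (n : ℕ) :
    (a * b / c) * (c / q - x) * (∏ i ∈ Finset.range (n + 1), (q * x - a * q ^ i))
      + (x - a) * (x - b) * (∏ i ∈ Finset.range (n + 1), (x / q - a * q ^ i))
      - (D * x ^ 2 - (a + b + a * b / c) * x + (1 + 1 / q) * a * b)
        * (∏ i ∈ Finset.range (n + 1), (x - a * q ^ i))
    = x ^ 2 * ((1 / q ^ (n + 1) - D) * (∏ i ∈ Finset.range (n + 1), (x - a * q ^ i))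
      - 1 / q ^ (n + 1) * b * (1 - a * q ^ (n + 1) / c) * (1 - q ^ (n + 1))
        * (∏ i ∈ Finset.range n, (x - a * q ^ i))) := by
  have h1 := aux_P_div q a x hq (n + 1)
  have h1' : (x - a) * (∏ i ∈ Finset.range (n + 1), (x / q - a * q ^ i))
      = (∏ i ∈ Finset.range (n + 1 + 1), (x - a * q ^ i)) / q ^ (n + 1) := by
    rw [← h1]; field_simp
  rw [aux_P_mul q a x hq n]
  have h2 : (x - a) * (x - b) * (∏ i ∈ Finset.range (n + 1), (x / q - a * q ^ i))
      = (x - b) * ((∏ i ∈ Finset.range (n + 1 + 1), (x - a * q ^ i)) / q ^ (n + 1)) := by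
    rw [← h1']; ring
  rw [h2, Finset.prod_range_succ _ (n + 1), Finset.prod_range_succ _ n]
  generalize (∏ i ∈ Finset.range n, (x - a * q ^ i)) = P
  have : q ^ n ≠ 0 := pow_ne_zero _ hq
  rw [pow_succ]
  generalize q ^ n = Q at *
  field_simp
  ring

noncomputable def auxS (q a b c D : ℝ) (M : ℕ) (x : ℝ) : ℝ :=
  ∑ n ∈ Finset.range (M + 1),
    qPoch q D n / (qPoch q (q * a / c) n * qPoch q q n) * qPoch q (a / x) n * (x / (b / q)) ^ n

theorem aux_step (q a b c D : ℝ) (x : ℝ) (hx : x ≠ 0) (M : ℕ) :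
    auxS q a b c D (M + 1) x = auxS q a b c D M x +
      qPoch q D (M + 1) / (qPoch q (q * a / c) (M + 1) * qPoch q q (M + 1))
        * ((1 / (b / q)) ^ (M + 1) * ∏ i ∈ Finset.range (M + 1), (x - a * q ^ i)) := by
  rw [auxS, Finset.sum_range_succ, ← aux_u q a x _ hx, ← auxS]
  ring

theorem aux_sum (q a b c D x : ℝ) (hq : 0 < q) (hq1 : q ≠ 1) (hx : x ≠ 0) (hb : b ≠ 0) (hc : c ≠ 0)
    (M : ℕ) (hden : ∀ n : ℕ, 1 ≤ n → n ≤ M → 1 - a * q ^ n / c ≠ 0) :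
    (a * b / c) * (c / q - x) * auxS q a b c D M (q * x)
      + (x - a) * (x - b) * auxS q a b c D M (x / q)
      - (D * x ^ 2 - (a + b + a * b / c) * x + (1 + 1 / q) * a * b) * auxS q a b c D M x
    = x ^ 2 * (qPoch q D M / (qPoch q (q * a / c) M * qPoch q q M)) * (1 / (b / q)) ^ M
      * (1 / q ^ M - D) * ∏ i ∈ Finset.range M, (x - a * q ^ i) := by
  have hq0 := hq.ne'
  induction M with
  | zero => simp [auxS, qPoch]; field_simp; ring
  | succ M ih =>
    have ih := ih (fun n h h' => hden n h (by omega))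
    rw [aux_step _ _ _ _ _ _ hx, aux_step _ _ _ _ _ _ (mul_ne_zero hq0 hx),
      aux_step _ _ _ _ _ _ (div_ne_zero hx hq0)]
    have hT := aux_T q a b c D x hq0 hc M
    have hK : qPoch q D (M + 1) / (qPoch q (q * a / c) (M + 1) * qPoch q q (M + 1))
         * (1 / (b / q)) ^ (M + 1) * (1 / q ^ (M + 1) * b * (1 - a * q ^ (M + 1) / c) * (1 - q ^ (M + 1)))
        = (qPoch q D M / (qPoch q (q * a / c) M * qPoch q q M)) * (1 / (b / q)) ^ M
          * (1 / q ^ M - D) := by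
      have e1 : 1 - a * q ^ (M + 1) / c ≠ 0 := hden (M + 1) (by omega) le_rfl
      have e2 : 1 - q ^ (M + 1) ≠ 0 := by
        intro h
        have : q ^ (M + 1) = 1 := by linarith
        exact hq1 ((pow_eq_one_iff_of_nonneg hq.le (by omega)).1 this)
      have f1 : qPoch q D (M + 1) = qPoch q D M * (1 - D * q ^ M) := by
        unfold qPoch; rw [Finset.prod_range_succ]
      have f2 : qPoch q (q * a / c) (M + 1) = qPoch q (q * a / c) M * (1 - a * q ^ (M + 1) / c) := by
        unfold qPoch; rw [Finset.prod_range_succ]; congr 1; ring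
      have f3 : qPoch q q (M + 1) = qPoch q q M * (1 - q ^ (M + 1)) := by
        unfold qPoch; rw [Finset.prod_range_succ]; congr 1; ring
      rw [f1, f2, f3, pow_succ (1 / (b / q))]
      generalize 1 - a * q ^ (M + 1) / c = E1 at *
      generalize 1 - q ^ (M + 1) = E2 at *
      have : qPoch q D M * (1 - D * q ^ M) / (qPoch q (q * a / c) M * E1 * (qPoch q q M * E2))
         = qPoch q D M  / (qPoch q (q * a / c) M * qPoch q q M) * ((1 - D * q ^ M) / (E1 * E2)) := by
        rw [div_mul_div_comm]; congr 1; ring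
      rw [this]
      generalize qPoch q D M  / (qPoch q (q * a / c) M * qPoch q q M) = K
      generalize (1 / (b / q)) ^ M = W
      field_simp
      ring
    generalize qPoch q D (M + 1) / (qPoch q (q * a / c) (M + 1) * qPoch q q (M + 1)) = K1 at *
    generalize qPoch q D M / (qPoch q (q * a / c) M * qPoch q q M) = K0 at *
    generalize (1 / (b / q)) ^ (M + 1) = W1 at *
    linear_combination ih + K1 * W1 * hT
      - x ^ 2 * (∏ i ∈ Finset.range M, (x - a * q ^ i)) * hK

/-- reduction of the equation to the normalised form -/
theorem aux_red (q h₁ h₂ l₁ α₁ lam t₁ t₂ a b c D : ℝ) (S : ℝ → ℝ) (hq : 0 < q) (ht₁ : t₁ ≠ 0)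
    (ha : a = q ^ (h₁ + 1/2) * t₁) (hb : b = q ^ (h₂ + 1/2) * t₂) (hc : c = q ^ (l₁ + 1/2) * t₁)
    (hD : D = q ^ (lam + α₁))
    (H : ∀ x : ℝ, 0 < x → (a * b / c) * (c / q - x) * S (q * x)
      + (x - a) * (x - b) * S (x / q)
      - (D * x ^ 2 - (a + b + a * b / c) * x + (1 + 1 / q) * a * b) * S x = 0) :
    confEq12 q h₁ h₂ l₁ α₁ lam t₁ t₂ (fun x => x ^ lam * S x) := by
  intro x hx
  have H := H x hx
  have hs : q = q ^ (1/2 : ℝ) * q ^ (1/2 : ℝ) := by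
    rw [← Real.rpow_add hq]; norm_num
  have hs0 : q ^ (1/2 : ℝ) ≠ 0 := (Real.rpow_pos_of_pos hq _).ne'
  have hl0 : q ^ l₁ ≠ 0 := (Real.rpow_pos_of_pos hq _).ne'
  have hL0 : q ^ lam ≠ 0 := (Real.rpow_pos_of_pos hq _).ne'
  have h10 : q ^ h₁ ≠ 0 := (Real.rpow_pos_of_pos hq _).ne'
  have h20 : q ^ h₂ ≠ 0 := (Real.rpow_pos_of_pos hq _).ne'
  have h2L : q ^ (2 * lam) = q ^ lam * q ^ lam := by rw [← Real.rpow_add hq]; ring_nf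
  simp only [Real.mul_rpow hq.le hx.le, Real.div_rpow hx.le hq.le]
  simp only [Real.rpow_add hq, Real.rpow_sub hq, Real.rpow_neg hq.le, h2L] at *
  generalize S (q * x) = S1 at *
  generalize S (x / q) = S2 at *
  generalize S x = S0 at *
  generalize x ^ lam = X at *
  generalize q ^ (1/2 : ℝ) = s at *
  generalize q ^ l₁ = l at *
  generalize q ^ lam = L at *
  generalize q ^ α₁ = A at *
  generalize q ^ h₁ = e1 at *
  generalize q ^ h₂ = e2 at *
  subst ha hb hc hD hs
  have : ∀ E : ℝ, E = X / L * 0 → E = 0 := by intro E h; simpa using h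
  apply this
  rw [← H]
  field_simp

theorem stmt6 (q h₁ h₂ l₁ α₁ lam t₁ t₂ hᵢ hᵢ' tᵢ tᵢ' : ℝ) (N : ℕ)
    (hq : 0 < q) (hq1 : q ≠ 1) (ht₁ : t₁ ≠ 0) (ht₂ : t₂ ≠ 0)
    (hidx : (hᵢ, hᵢ', tᵢ, tᵢ') = (h₁, h₂, t₁, t₂) ∨ (hᵢ, hᵢ', tᵢ, tᵢ') = (h₂, h₁, t₂, t₁))
    (hN : 0 < N) (hNlam : lam + α₁ = -(N : ℝ))
    (hden : ∀ n : ℕ, 1 ≤ n → n ≤ N → q ^ (hᵢ - l₁ + (n : ℝ)) * tᵢ / t₁ ≠ 1) :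
    confEq12 q h₁ h₂ l₁ α₁ lam t₁ t₂ (fun x =>
      x ^ lam * ∑ n ∈ Finset.range (N + 1),
        qPoch q (q ^ (lam + α₁)) n /
            (qPoch q (q ^ (hᵢ - l₁ + 1) * tᵢ / t₁) n * qPoch q q n) *
          qPoch q (q ^ (hᵢ + 1/2) * tᵢ / x) n * (x / (q ^ (hᵢ' - 1/2) * tᵢ')) ^ n) := by
  have hD : q ^ (lam + α₁) * q ^ N = 1 := by
    rw [hNlam, Real.rpow_neg hq.le, Real.rpow_natCast]
    exact inv_mul_cancel₀ (pow_ne_zero _ hq.ne')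
  have hpos : ∀ s : ℝ, q ^ s ≠ 0 := fun s => (Real.rpow_pos_of_pos hq s).ne'
  have hti' : tᵢ' ≠ 0 := by
    rcases hidx with h | h <;> simp only [Prod.mk.injEq] at h <;> obtain ⟨-, -, -, rfl⟩ := h <;> assumption
  have hac : ∀ s : ℝ, (q ^ (hᵢ + 1/2) * tᵢ) * q ^ s / (q ^ (l₁ + 1/2) * t₁)
      = q ^ (hᵢ - l₁ + s) * tᵢ / t₁ := by
    intro s
    have := hpos l₁
    have := hpos (1/2)
    simp only [Real.rpow_add hq, Real.rpow_sub hq]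
    field_simp
  have hfun : ∀ x : ℝ, auxS q (q ^ (hᵢ + 1/2) * tᵢ) (q ^ (hᵢ' + 1/2) * tᵢ') (q ^ (l₁ + 1/2) * t₁)
      (q ^ (lam + α₁)) N x = ∑ n ∈ Finset.range (N + 1),
        qPoch q (q ^ (lam + α₁)) n /
            (qPoch q (q ^ (hᵢ - l₁ + 1) * tᵢ / t₁) n * qPoch q q n) *
          qPoch q (q ^ (hᵢ + 1/2) * tᵢ / x) n * (x / (q ^ (hᵢ' - 1/2) * tᵢ')) ^ n := by
    intro x
    have e1 := hac 1
    rw [Real.rpow_one, mul_comm _ q] at e1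
    have e2 : q ^ (hᵢ' + 1/2) * tᵢ' / q = q ^ (hᵢ' - 1/2) * tᵢ' := by
      have : hᵢ' + 1/2 = (hᵢ' - 1/2) + 1 := by ring
      rw [this, Real.rpow_add hq, Real.rpow_one]
      field_simp
    unfold auxS
    rw [e1, e2]
  have key : ∀ x : ℝ, 0 < x → _ := fun x hx => aux_sum q (q ^ (hᵢ + 1/2) * tᵢ)
    (q ^ (hᵢ' + 1/2) * tᵢ') (q ^ (l₁ + 1/2) * t₁) (q ^ (lam + α₁)) x hq hq1 hx.ne'
    (mul_ne_zero (hpos _) hti') (mul_ne_zero (hpos _) ht₁) N (by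
      intro n h1 h2 h
      have e := hac n
      rw [Real.rpow_natCast] at e
      rw [e] at h
      exact hden n h1 h2 (by linarith))
  have hz : 1 / q ^ N - q ^ (lam + α₁) = 0 := by
    rw [← hD]; have := pow_ne_zero N hq.ne'; field_simp; ring
  simp only [hz, mul_zero, zero_mul] at key
  simp only [← hfun]
  rcases hidx with h | h <;> simp only [Prod.mk.injEq] at h <;> obtain ⟨rfl, rfl, rfl, rfl⟩ := h
  · exact aux_red _ _ _ _ _ _ _ _ _ _ _ _ _ hq ht₁ rfl rfl rfl rfl key
  · refine aux_red _ _ _ _ _ _ _ _ _ _ _ _ _ hq ht₁ rfl rfl rfl rfl ?_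
    intro x hx
    rw [← key x hx]
    ring
end
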